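/- Let h be a symmetric traceless 2×2 real matrix. Then the totally symmetric part of h⊗h corrected by its isotropic trace part equals the harmonic square: for all indices i, j, k, l, (h⊙h) i j k l − ¼(Σₚq (h p q)²)·(δ⊙δ) i j k l = h i j · h k l − ½(Σₚq (h p q)²)·J i j k l, where (h⊙h) and (δ⊙δ) denote the total symmetrizations (averages over all 24 index permutations) of the fourth-order tensors h i j · h k l and δ i j · δ k l respectively. -/

import Mathlib

open Finset

noncomputable section

/-- A fourth-order tensor on `ℝ²`. -/
abbrev Tens4 := Fin 2 → Fin 2 → Fin 2 → Fin 2 → ℝ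

/-- Kronecker delta on `Fin 2`. -/
def kdelta (i j : Fin 2) : ℝ := if i = j then 1 else 0

/-- The isotropic fourth-order tensor `J`. -/
def Jten (i j k l : Fin 2) : ℝ :=
  (kdelta i k * kdelta j l + kdelta i l * kdelta j k) / 2 - kdelta i j * kdelta k l / 2

/-- A 2D elasticity tensor: minor and major index symmetries. -/
def IsElas (C : Tens4) : Prop :=
  (∀ i j k l, C i j k l = C j i k l) ∧ (∀ i j k l, C i j k l = C i j l k) ∧
    (∀ i j k l, C i j k l = C k l i j)

/-- Dilatation tensor `d(C)ᵢⱼ = Σₖ C k k i j`. -/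
def dil (C : Tens4) (i j : Fin 2) : ℝ := ∑ k, C k k i j

/-- Voigt tensor `v(C)ᵢⱼ = Σₖ C k i k j`. -/
def voigt (C : Tens4) (i j : Fin 2) : ℝ := ∑ k, C k i k j

/-- Shear modulus `μ(C)`. -/
def muC (C : Tens4) : ℝ := (2 * ∑ i, voigt C i i - ∑ i, dil C i i) / 8

/-- 2D bulk modulus `κ(C)`. -/
def kappaC (C : Tens4) : ℝ := (∑ i, dil C i i) / 4

/-- Deviatoric part `d'(C)` of the dilatation tensor. -/
def devC (C : Tens4) (i j : Fin 2) : ℝ := dil C i j - (∑ k, dil C k k) / 2 * kdelta i j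

/-- Harmonic (fourth-order) part `H(C)` of the elasticity tensor. -/
def harmC (C : Tens4) (i j k l : Fin 2) : ℝ :=
  C i j k l - 2 * muC C * Jten i j k l - kappaC C * kdelta i j * kdelta k l
    - (kdelta i j * devC C k l + devC C i j * kdelta k l) / 2

/-- A 2D harmonic fourth-order tensor: totally symmetric (invariant under all
permutations of its four indices) and traceless. -/
def IsHarmonic (H : Tens4) : Prop :=
  (∀ (σ : Equiv.Perm (Fin 4)) (v : Fin 4 → Fin 2),
      H (v (σ 0)) (v (σ 1)) (v (σ 2)) (v (σ 3)) = H (v 0) (v 1) (v 2) (v 3)) ∧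
    (∀ i j : Fin 2, ∑ k, H k k i j = 0)

/-- A symmetric traceless (deviatoric) `2×2` real matrix. -/
def IsDev (h : Matrix (Fin 2) (Fin 2) ℝ) : Prop :=
  (∀ i j, h i j = h j i) ∧ h 0 0 + h 1 1 = 0

/-- The harmonic square `h ∗ h` of a symmetric traceless `2×2` matrix `h`. -/
def hsq (h : Matrix (Fin 2) (Fin 2) ℝ) (i j k l : Fin 2) : ℝ :=
  h i j * h k l - (∑ p, ∑ q, (h p q) ^ 2) / 2 * Jten i j k l

/-- Total symmetrization of a fourth-order tensor: the average over all 24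
permutations of the four indices. -/
def sym4 (T : Tens4) (i j k l : Fin 2) : ℝ :=
  (∑ σ : Equiv.Perm (Fin 4),
    T (![i, j, k, l] (σ 0)) (![i, j, k, l] (σ 1)) (![i, j, k, l] (σ 2))
      (![i, j, k, l] (σ 3))) / 24

/-!
Symmetrizing a tensor with the minor and major index symmetries averages it over the three ways of
pairing up its indices. In dimension two the pairings of `h ⊗ h` are related through the `2 × 2`
minors of `h`, and each minor is `det h` times the corresponding minor of the identity. Hence, for
symmetric `h`, the tensors `h ⊙ h` and `h ⊗ h` differ by `det h` times an isotropic tensor. If `h`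
is also traceless, then `‖h‖² = -2 det h`.
-/

section PermSums

variable {α M : Type*} [AddCommMonoid M]

-- `p.cycleRange.symm` sends `0` to `p` and `i.succ` to `p.succAbove i`, so the product by a
-- permutation fixing `0` chooses `p` first and then arranges the remaining values.
theorem bijective_cycleRange_symm_mul_decomposeFin_symm (n : ℕ) :
    Function.Bijective fun x : Fin (n + 1) × Equiv.Perm (Fin n) =>
      x.1.cycleRange.symm * Equiv.Perm.decomposeFin.symm (0, x.2) := by
  refine (Fintype.bijective_iff_injective_and_card _).2
    ⟨?_, Fintype.card_congr Equiv.Perm.decomposeFin.symm⟩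
  rintro ⟨p, e⟩ ⟨q, f⟩ hpq
  obtain rfl : p = q := by simpa using Equiv.congr_fun hpq 0
  simpa using hpq

theorem sum_perm_fin_succ_comp {n : ℕ} (F : (Fin (n + 1) → α) → M) (v : Fin (n + 1) → α) :
    ∑ σ : Equiv.Perm (Fin (n + 1)), F (v ∘ σ) =
      ∑ p, ∑ e : Equiv.Perm (Fin n), F (Matrix.vecCons (v p) (p.removeNth v ∘ e)) := by
  rw [← Fintype.sum_prod_type',
    ← (bijective_cycleRange_symm_mul_decomposeFin_symm n).sum_comp fun σ => F (v ∘ σ)]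
  refine Fintype.sum_congr _ _ fun ⟨p, e⟩ => congrArg F (funext fun i => ?_)
  cases i using Fin.cases <;> simp [Fin.removeNth]

theorem sum_perm_fin_two (F : α → α → M) (v : Fin 2 → α) :
    ∑ σ : Equiv.Perm (Fin 2), F (v (σ 0)) (v (σ 1)) = F (v 0) (v 1) + F (v 1) (v 0) := by
  refine (sum_perm_fin_succ_comp (fun w => F (w 0) (w 1)) v).trans ?_
  simp [Fin.sum_univ_two, Fin.removeNth]

theorem sum_perm_fin_three_of_symm {F : α → α → α → M} (hF : ∀ a b c, F a b c = F a c b)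
    (v : Fin 3 → α) :
    ∑ σ : Equiv.Perm (Fin 3), F (v (σ 0)) (v (σ 1)) (v (σ 2)) =
      2 • (F (v 0) (v 1) (v 2) + F (v 1) (v 0) (v 2) + F (v 2) (v 0) (v 1)) :=
  calc
    _ = ∑ p, ∑ e : Equiv.Perm (Fin 2), F (v p) (p.removeNth v (e 0)) (p.removeNth v (e 1)) :=
      sum_perm_fin_succ_comp (fun w => F (w 0) (w 1) (w 2)) v
    _ = ∑ p, 2 • F (v p) (p.removeNth v 0) (p.removeNth v 1) := by
      refine Fintype.sum_congr _ _ fun p => ?_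
      rw [sum_perm_fin_two (F (v p)), hF _ (p.removeNth v 1), two_nsmul]
    _ = _ := by
      rw [sum_nsmul, Fin.sum_univ_three]
      rfl

end PermSums

theorem IsElas.sym4_eq {T : Tens4} (hT : IsElas T) (i j k l : Fin 2) :
    sym4 T i j k l = (T i j k l + T i k j l + T i l j k) / 3 := by
  obtain ⟨hleft, hright, hmajor⟩ := hT
  have sum_first_index :
      ∑ σ : Equiv.Perm (Fin 4), T (![i, j, k, l] (σ 0)) (![i, j, k, l] (σ 1))
          (![i, j, k, l] (σ 2)) (![i, j, k, l] (σ 3)) =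
        2 * (T i j k l + T i k j l + T i l j k) + 2 * (T j i k l + T j k i l + T j l i k)
          + 2 * (T k i j l + T k j i l + T k l i j)
          + 2 * (T l i j k + T l j i k + T l k i j) := by
    refine (sum_perm_fin_succ_comp (fun w => T (w 0) (w 1) (w 2) (w 3)) ![i, j, k, l]).trans ?_
    refine (Fintype.sum_congr _ _ fun p => sum_perm_fin_three_of_symm
      (hright (![i, j, k, l] p)) (p.removeNth ![i, j, k, l])).trans ?_
    simp only [nsmul_eq_mul, Nat.cast_ofNat, Fin.sum_univ_four]
    rfl
  rw [sym4, sum_first_index, hleft j i k l, hmajor j k i l, hmajor j l i k,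
    hleft k i j l, hleft k j i l, hmajor j k i l, hmajor k l i j,
    hleft l i j k, hleft l j i k, hmajor j l i k, hleft l k i j, hmajor k l i j]
  ring

theorem isElas_mul_self_of_isSymm {g : Matrix (Fin 2) (Fin 2) ℝ} (hg : g.IsSymm) :
    IsElas fun i j k l => g i j * g k l :=
  ⟨fun i j k l => congrArg (· * g k l) (hg.apply j i),
    fun i j k l => congrArg (g i j * ·) (hg.apply l k),
    fun _ _ _ _ => mul_comm _ _⟩

section Minors

variable {n R : Type*} [Fintype n] [DecidableEq n] [CommRing R]

theorem det_submatrix_eq_det_mul_det_one_submatrix (A : Matrix n n R) (f g : n → n) :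
    (A.submatrix f g).det = A.det * ((1 : Matrix n n R).submatrix f g).det := by
  have factor (B : Matrix n n R) :
      B.submatrix f g =
        (1 : Matrix n n R).submatrix f id * B * (1 : Matrix n n R).submatrix id g := by
    ext
    simp [Matrix.mul_apply, Matrix.one_apply]
  rw [factor A, factor 1]
  simp only [Matrix.det_mul, Matrix.det_one]
  ring

theorem minor_fin_two_eq_det_mul_minor_one (A : Matrix (Fin 2) (Fin 2) R) (i j k l : Fin 2) :
    A i j * A k l - A i l * A k j = A.det *
      ((1 : Matrix (Fin 2) (Fin 2) R) i j * (1 : Matrix (Fin 2) (Fin 2) R) k l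
        - (1 : Matrix (Fin 2) (Fin 2) R) i l * (1 : Matrix (Fin 2) (Fin 2) R) k j) := by
  have minor := det_submatrix_eq_det_mul_det_one_submatrix A ![i, k] ![j, l]
  rwa [Matrix.det_fin_two (A.submatrix _ _), Matrix.det_fin_two (Matrix.submatrix 1 _ _)] at minor

end Minors

theorem kdelta_eq_one_apply (i j : Fin 2) :
    kdelta i j = (1 : Matrix (Fin 2) (Fin 2) ℝ) i j :=
  rfl

theorem IsDev.isSymm {h : Matrix (Fin 2) (Fin 2) ℝ} (hd : IsDev h) : h.IsSymm :=
  Matrix.IsSymm.ext fun i j => hd.1 j i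

theorem IsDev.sum_sq_eq_neg_two_mul_det {h : Matrix (Fin 2) (Fin 2) ℝ} (hd : IsDev h) :
    ∑ p, ∑ q, h p q ^ 2 = -2 * h.det := by
  obtain ⟨hsymm, htrace⟩ := hd
  simp only [Fin.sum_univ_two, Matrix.det_fin_two, hsymm 1 0]
  linear_combination (h 0 0 + h 1 1) * htrace

theorem sym_square_minus_trace_part_eq_harmonic_square_general
    {h : Matrix (Fin 2) (Fin 2) ℝ} (hh : h.IsSymm) (i j k l : Fin 2) :
    sym4 (fun i j k l => h i j * h k l) i j k l
        + h.det / 2 * sym4 (fun i j k l => kdelta i j * kdelta k l) i j k l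
      = h i j * h k l + h.det * Jten i j k l := by
  simp only [kdelta_eq_one_apply, Jten, (isElas_mul_self_of_isSymm hh).sym4_eq,
    (isElas_mul_self_of_isSymm Matrix.isSymm_one).sym4_eq]
  have minor_jl := minor_fin_two_eq_det_mul_minor_one h i j k l
  have minor_jk := minor_fin_two_eq_det_mul_minor_one h i j l k
  rw [hh.apply j k, Matrix.isSymm_one.apply j k] at minor_jl
  rw [hh.apply k l, hh.apply j l, Matrix.isSymm_one.apply k l,
    Matrix.isSymm_one.apply j l] at minor_jk
  linear_combination (-1 / 3) * minor_jl - (1 / 3) * minor_jk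

/-- For a symmetric traceless `2×2` matrix `h`,
`(h ⊙ h) − ¼‖h‖² (δ ⊙ δ) = h ⊗ h − ½‖h‖² J` (the harmonic square). -/
theorem sym_square_minus_trace_part_eq_harmonic_square
    (h : Matrix (Fin 2) (Fin 2) ℝ) (hd : IsDev h) :
    ∀ i j k l,
      sym4 (fun i j k l => h i j * h k l) i j k l
          - (∑ p, ∑ q, (h p q) ^ 2) / 4
            * sym4 (fun i j k l => kdelta i j * kdelta k l) i j k l
        = h i j * h k l - (∑ p, ∑ q, (h p q) ^ 2) / 2 * Jten i j k l := by
  intro i j k l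
  rw [hd.sum_sq_eq_neg_two_mul_det]
  linear_combination
    sym_square_minus_trace_part_eq_harmonic_square_general hd.isSymm i j k l
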